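/- Let m ≥ 1 and n ≥ 0 be integers. Then ∑_{k=0}^∞ (H_k² − H_k^{(2)})/((n+k+1)^(m+1)·C(n+k,k)) = ((-1)^(n-1)/3)·∑_{k=1}^n (-1)^(k-1)/k^m · C(n,k)·(H_n³ + 2H_n^{(3)} + 3H_n·H_n^{(2)} − H_{n−k}³ − 2H_{n−k}^{(3)} − 3H_{n−k}·H_{n−k}^{(2)}) + ((-1)^(m+n)/m!)·[(H_n² + H_n^{(2)})·F_1 − H_n·F_2 + (1/3)·F_3], where for a = 1,2,3, F_a denotes the a-th derivative at x = n of the real function x ↦ (the m-th derivative at z = 1 of z ↦ Γ(x+1)Γ(z)/Γ(x+z)). -/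

import Mathlib

/-!
Write `R_k(x) = ∏_{i=1}^k (1 + x/i)` (`riseProd`) and let `f(x)` be the `m`-th derivative of
`z ↦ Γ(x+1)Γ(z)/Γ(x+z)` at `z = 1`. Expanding `(1 - t)^x` in the beta integral gives a partial fraction
expansion in `z` (`hasSum_gamma_quot`); differentiating it term by term yields, for `x = n + ε`,
`f(x) = (-1)^m m! ∑_{j ≥ 0} x R_j(-x) / (j+1)^{m+1}` (`iteratedDeriv_gamma_quot_one`).

The coefficients `x R_j(-x)` factor through `R_n(ε)`. For `j < n` they equal
`(-1)^j (j+1) C(n,j+1) R_n(ε) / R_{n-j-1}(ε)` (`riseProd_head`), and for `j = n + k` they equal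
`(-1)^n ε R_n(ε) R_k(-ε) / C(n+k,k)` (`riseProd_tail`). Hence `f(n+ε) = (-1)^m m! R_n(ε) S(ε)`, where `S`
is a finite sum of multiples of `1 / R_{n-j-1}(ε)` plus
`(-1)^n ε ∑_k R_k(-ε) / ((n+k+1)^{m+1} C(n+k,k))` (`iteratedDeriv_gamma_quot_split`).

The coefficient of `ε²` in `R_k(-ε)` is `(H_k² - H_k^{(2)})/2`, so the series of the theorem sits in the
coefficient of `ε³` in `S`, and the finite sum contributes the coefficients
`-(H³ + 3 H H^{(2)} + 2 H^{(3)})/6` of `1/R_{n-j-1}` (`exists_hasTaylor_gamma_quot`). That coefficient of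
`S` is recovered from `F₁, F₂, F₃` on multiplying `f(n+ε)` by `1/R_n(ε)`, whose Taylor coefficients
`1, -H_n, (H_n² + H_n^{(2)})/2` are half the multipliers of the Taylor coefficients `F₃/6, F₂/2, F₁`
of `f` at `n` in the theorem. The term missing from this product,
`-(H_n³ + 3 H_n H_n^{(2)} + 2 H_n^{(3)})/6` times the constant coefficient of `S`, is the `H_n`-part of the finite sum over `k`.
-/

/-- The harmonic number `H_n = ∑_{k=1}^n 1/k`. -/
noncomputable def H (n : ℕ) : ℝ := ∑ i ∈ Finset.range n, (1 : ℝ) / (i + 1)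

/-- The generalized harmonic number `H_n^{(2)} = ∑_{k=1}^n 1/k²`. -/
noncomputable def H2 (n : ℕ) : ℝ := ∑ i ∈ Finset.range n, (1 : ℝ) / (i + 1) ^ 2

/-- The generalized harmonic number `H_n^{(3)} = ∑_{k=1}^n 1/k³`. -/
noncomputable def H3 (n : ℕ) : ℝ := ∑ i ∈ Finset.range n, (1 : ℝ) / (i + 1) ^ 3

section

open Finset Filter Topology MeasureTheory

/-! ### The products `∏ (1 + x / i)` -/

/-- The product `∏_{i=1}^k (1 + x/i)`, that is `(x+1)(x+2)⋯(x+k)/k!`. At `x = -(y+1)` it is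
`(-1)^k` times the generalized binomial coefficient `C(y, k)`. -/
noncomputable def riseProd (k : ℕ) (x : ℝ) : ℝ := ∏ i ∈ range k, (1 + x / (i + 1))

lemma riseProd_zero (x : ℝ) : riseProd 0 x = 1 := by simp [riseProd]

lemma riseProd_succ (k : ℕ) (x : ℝ) :
    riseProd (k + 1) x = riseProd k x * (1 + x / (k + 1)) := by
  simp [riseProd, prod_range_succ]

lemma riseProd_pos (k : ℕ) {x : ℝ} (hx : |x| ≤ 1 / 3) : 0 < riseProd k x := by
  refine prod_pos fun i _ => ?_
  have hi : (0 : ℝ) < i + 1 := by positivity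
  have h := abs_le.1 hx
  have : 1 + x / (i + 1) = (i + 1 + x) / (i + 1) := by field_simp
  rw [this]
  have : (0:ℝ) ≤ i := by positivity
  exact div_pos (by linarith) hi

lemma abs_riseProd_le (k : ℕ) (x : ℝ) : |riseProd k x| ≤ riseProd k |x| := by
  unfold riseProd
  rw [abs_prod]
  refine prod_le_prod (fun _ _ => abs_nonneg _) fun i _ => ?_
  refine (abs_add_le _ _).trans ?_
  have hi : (0 : ℝ) < i + 1 := by positivity
  rw [abs_one, abs_div, abs_of_pos hi]

/-- `riseProd k x` is of order `k ^ x`; the exponent `1/2` leaves enough room above `x ≤ 1/3` for an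
induction on `k`. -/
lemma riseProd_le_sqrt (k : ℕ) {x : ℝ} (h0 : 0 ≤ x) (hx : x ≤ 1 / 3) :
    riseProd k x ≤ √(k + 1) := by
  induction k with
  | zero => simp [riseProd_zero]
  | succ k ih =>
    rw [riseProd_succ]
    have hk : (0 : ℝ) < k + 1 := by positivity
    have h1 : 1 + x / (k + 1) ≤ √((k + 1 + 1) / (k + 1)) := by
      refine Real.le_sqrt_of_sq_le ?_
      have h2 : (k + 1 + 1) / ((k : ℝ) + 1) = 1 + 1 / (k + 1) := by field_simp
      have h3 : x / ((k : ℝ) + 1) ≤ 1 / 3 * (1 / (k + 1)) := by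
        rw [div_eq_mul_one_div]; gcongr
      have h4 : 1 / ((k : ℝ) + 1) ≤ 1 := by
        rw [div_le_one hk]; linarith [(Nat.cast_nonneg k : (0 : ℝ) ≤ k)]
      have h5 : 0 ≤ 1 / ((k : ℝ) + 1) := by positivity
      have h6 : 0 ≤ x / ((k : ℝ) + 1) := by positivity
      rw [h2]; nlinarith
    calc _ ≤ √(k + 1) * √((k + 1 + 1) / (k + 1)) := by gcongr
      _ = √((k + 1 : ℕ) + 1) := by
        rw [← Real.sqrt_mul hk.le]; congr 1; push_cast; field_simp

/-- Shifting the argument by one trades a factor of order `1 / j`. Iterated, it carries bounds for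
arguments near `0` to arguments near `-n`. -/
lemma riseProd_neg_succ (j : ℕ) (x : ℝ) :
    riseProd (j + 1) (-(x + 1)) = -x / (j + 1) * riseProd j (-x) := by
  induction j with
  | zero => simp [riseProd]
  | succ j ih =>
    rw [riseProd_succ, ih, riseProd_succ]
    push_cast
    field_simp
    ring

lemma exists_riseProd_bound (n : ℕ) : ∃ C, 0 ≤ C ∧ ∀ ε : ℝ, |ε| ≤ 1 / 3 → ∀ j : ℕ,
    |riseProd j (-(n + ε))| ≤ C * √(j + 1) := by
  induction n with
  | zero =>
    refine ⟨1, zero_le_one, fun ε hε j => ?_⟩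
    rw [one_mul]
    refine (abs_riseProd_le _ _).trans (riseProd_le_sqrt j (abs_nonneg _) ?_)
    simpa using hε
  | succ n ih =>
    obtain ⟨C, hC, h⟩ := ih
    refine ⟨(n + 1) * C + 1, by positivity, fun ε hε j => ?_⟩
    cases j with
    | zero => simp [riseProd_zero]; positivity
    | succ j =>
      have : -(((n + 1 : ℕ) : ℝ) + ε) = -(n + ε + 1) := by push_cast; ring
      rw [this, riseProd_neg_succ, abs_mul, abs_div, abs_neg]
      have hj : (0 : ℝ) < j + 1 := by positivity
      have h1 : |(n : ℝ) + ε| ≤ n + 1 := by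
        have := abs_le.1 hε
        rw [abs_le]; constructor <;> linarith [(Nat.cast_nonneg n : (0 : ℝ) ≤ n)]
      have h2 : |(n : ℝ) + ε| / |(j : ℝ) + 1| ≤ n + 1 := by
        rw [abs_of_pos hj]
        refine div_le_of_le_mul₀ hj.le (by positivity) (h1.trans ?_)
        nlinarith [(Nat.cast_nonneg j : (0 : ℝ) ≤ j), (Nat.cast_nonneg n : (0 : ℝ) ≤ n)]
      calc _ ≤ (n + 1) * (C * √(j + 1)) := by gcongr; exact h ε hε j
        _ ≤ (n + 1) * (C * √((j + 1 : ℕ) + 1)) := by gcongr; simp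
        _ ≤ _ := by nlinarith [Real.sqrt_nonneg (((j + 1 : ℕ) : ℝ) + 1)]

/-- Sharper than `exists_riseProd_bound`: one shift to the left of `-(n + ε)` gains a factor
`1 / (j + 1)`. -/
lemma exists_riseProd_decay (n : ℕ) : ∃ C, 0 ≤ C ∧ ∀ ε : ℝ, |ε| ≤ 1 / 3 → ∀ j : ℕ,
    |riseProd j (-(n + ε + 1))| ≤ C / √(j + 1) := by
  obtain ⟨C, hC, h⟩ := exists_riseProd_bound n
  refine ⟨2 * (n + 1) * C + 1, by positivity, fun ε hε j => ?_⟩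
  cases j with
  | zero => simp [riseProd_zero]; positivity
  | succ j =>
    rw [riseProd_neg_succ, abs_mul, abs_div, abs_neg]
    have hj : (0 : ℝ) < j + 1 := by positivity
    have h1 : |(n : ℝ) + ε| ≤ n + 1 := by
      have := abs_le.1 hε
      rw [abs_le]; constructor <;> linarith [(Nat.cast_nonneg n : (0 : ℝ) ≤ n)]
    rw [abs_of_pos hj, le_div_iff₀ (by positivity)]
    have h3 : √((j : ℝ) + 1) * √((j + 1 : ℕ) + 1) ≤ 2 * (j + 1) := by
      rw [← Real.sqrt_mul hj.le]
      refine Real.sqrt_le_iff.2 ⟨by positivity, ?_⟩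
      push_cast; nlinarith [(Nat.cast_nonneg j : (0 : ℝ) ≤ j)]
    calc _ ≤ (n + 1) / ((j : ℝ) + 1) * (C * √(j + 1)) * √((j + 1 : ℕ) + 1) := by
          gcongr; exact h ε hε j
      _ = (n + 1) * C / (j + 1) * (√((j : ℝ) + 1) * √((j + 1 : ℕ) + 1)) := by ring
      _ ≤ (n + 1) * C / (j + 1) * (2 * (j + 1)) := by gcongr
      _ = 2 * (n + 1) * C := by field_simp
      _ ≤ _ := by linarith

/-- For `j < n` the numerators of `(n + ε) * riseProd j (-(n + ε))` are, up to sign, the `j + 1` topmost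
ones of `riseProd n ε`, and `riseProd (n - (j + 1)) ε` supplies the others. -/
lemma riseProd_head (n j : ℕ) (hj : j < n) (ε : ℝ) :
    (n + ε) * riseProd j (-(n + ε)) * riseProd (n - (j + 1)) ε =
      (-1) ^ j * (j + 1) * n.choose (j + 1) * riseProd n ε := by
  induction j with
  | zero =>
    obtain ⟨n, rfl⟩ : ∃ r, n = r + 1 := ⟨n - 1, by omega⟩
    simp [riseProd_zero, riseProd_succ]
    field_simp
  | succ j ih =>
    obtain ⟨r, rfl⟩ : ∃ r, n = r + 1 + (j + 1) := ⟨n - (j + 2), by omega⟩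
    have ih := ih (by omega)
    have hc : ((r + 1 + (j + 1)).choose (j + 2) : ℝ) * (j + 2)
        = (r + 1 + (j + 1)).choose (j + 1) * (r + 1) := by
      have := Nat.choose_succ_right_eq (r + 1 + (j + 1)) (j + 1)
      rw [show r + 1 + (j + 1) - (j + 1) = r + 1 by omega] at this
      exact_mod_cast this
    rw [show r + 1 + (j + 1) - (j + 1) = r + 1 by omega, riseProd_succ] at ih
    rw [show r + 1 + (j + 1) - (j + 1 + 1) = r by omega, riseProd_succ]
    push_cast at *
    have e1 : (1 + ε / ((r : ℝ) + 1)) = (r + 1 + ε) / (r + 1) := by field_simp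
    rw [e1] at ih
    have e2 : (1 + -((r : ℝ) + 1 + (j + 1) + ε) / (j + 1)) = -(r + 1 + ε) / (j + 1) := by
      field_simp; ring
    rw [e2]
    have e3 : ((-1 : ℝ)) ^ (j + 1) * (j + 1 + 1) * ((r + 1 + (j + 1)).choose (j + 1 + 1) : ℝ) =
        - (-1) ^ j * ((r + 1 + (j + 1)).choose (j + 1) * (r + 1)) := by
      rw [← hc]; ring
    rw [e3]
    have hj : (j : ℝ) + 1 ≠ 0 := by positivity
    have hr : (r : ℝ) + 1 ≠ 0 := by positivity
    field_simp at ih ⊢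
    linear_combination (-1 : ℝ) * ih

/-- From the index `n` on, `riseProd (n + k) (-(n + ε))` contains the small factor `-ε / n`; the
factors above it form `riseProd k (-ε)` up to a binomial coefficient. For `n = 0` the small factor is
the prefactor `n + ε`. -/
lemma riseProd_tail (n k : ℕ) (ε : ℝ) :
    (n + ε) * riseProd (n + k) (-(n + ε)) * (n + k).choose k =
      (-1) ^ n * ε * riseProd n ε * riseProd k (-ε) := by
  induction k with
  | zero =>
    cases n with
    | zero => simp [riseProd_zero]
    | succ n =>
      have h := riseProd_head (n + 1) n (by omega) ε
      simp [riseProd_zero, -neg_add_rev] at h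
      simp only [add_zero, riseProd_succ n (-_), Nat.choose_zero_right, riseProd_zero]
      push_cast at *
      have e2 : (1 + -((n : ℝ) + 1 + ε) / (n + 1)) = -ε / (n + 1) := by field_simp; ring
      rw [e2, ← mul_assoc ((n : ℝ) + 1 + ε), h]
      field_simp
      ring
  | succ k ih =>
    have hc : ((n + (k + 1)).choose (k + 1) : ℝ) * (k + 1) = (n + k).choose k * (n + k + 1) := by
      have := Nat.add_one_mul_choose_eq (n + k) k
      rw [← add_assoc, mul_comm _ ((k : ℝ) + 1)]
      have h' : ((n : ℝ) + k + 1) * (n + k).choose k = (n + k + 1).choose (k + 1) * (k + 1) := by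
        exact_mod_cast this
      linarith
    rw [← add_assoc, riseProd_succ, riseProd_succ] at *
    push_cast
    have e2 : (1 + -((n : ℝ) + ε) / (n + k + 1)) = (k + 1 - ε) / (n + k + 1) := by
      field_simp; ring
    have e1 : (1 + -ε / ((k : ℝ) + 1)) = (k + 1 - ε) / (k + 1) := by field_simp; ring
    rw [e1, e2]
    have hc' : ((n + k + 1).choose (k + 1) : ℝ) = (n + k).choose k * (n + k + 1) / (k + 1) := by
      rw [eq_div_iff (by positivity)]; exact hc
    rw [hc']
    have hj : (k : ℝ) + 1 ≠ 0 := by positivity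
    have hr : (n : ℝ) + k + 1 ≠ 0 := by positivity
    field_simp
    linear_combination ((k : ℝ) + 1 - ε) * ih


/-! ### Partial fractions of the Gamma quotient -/

lemma hasSum_of_eq {f g : ℕ → ℝ} {a : ℝ} (h : HasSum f a) (hfg : ∀ j, g j = f j) :
    HasSum g a := by
  rwa [funext hfg]

lemma riseProd_eq_choose (j : ℕ) (x : ℝ) :
    riseProd j (-(x + 1)) = (-1) ^ j * Ring.choose x j := by
  induction j with
  | zero => simp [riseProd_zero]
  | succ j ih =>
    have h : Ring.choose x (j + 1) = Ring.choose x j * (x - j) / (j + 1) := by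
      rw [Ring.choose_eq_smul, Ring.choose_eq_smul, descPochhammer_succ_right]
      simp [Polynomial.smeval_mul, Nat.factorial_succ, Polynomial.smeval_natCast]
      field_simp
    rw [riseProd_succ, ih, h]
    field_simp
    ring

/-- The binomial series of `(1 - t) ^ x`, with coefficients written through `riseProd`. -/
lemma hasSum_one_sub_rpow (x : ℝ) {t : ℝ} (ht : t ∈ Set.Ioo (0 : ℝ) 1) :
    HasSum (fun j => riseProd j (-(x + 1)) * t ^ j) ((1 - t) ^ x) := by
  have hmem : -t ∈ Metric.eball (0 : ℝ) 1 := by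
    have : Metric.eball (0 : ℝ) 1 = Metric.ball 0 1 := by
      rw [← ENNReal.ofReal_one, Metric.eball_ofReal]
    rw [this]
    simpa [abs_of_pos ht.1] using ht.2
  have h := (Real.one_add_rpow_hasFPowerSeriesOnBall_zero (a := x)).hasSum hmem
  simp only [binomialSeries_apply, zero_add] at h
  rw [sub_eq_add_neg]
  refine hasSum_of_eq h fun j => ?_
  rw [riseProd_eq_choose, List.ofFn_const, List.prod_replicate, smul_eq_mul, neg_pow t]
  ring

lemma integral_beta {z x : ℝ} (hz : 0 < z) (hx : 0 < x + 1) :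
    ∫ t in Set.Ioo (0 : ℝ) 1, t ^ (z - 1) * (1 - t) ^ x =
      Real.Gamma z * Real.Gamma (x + 1) / Real.Gamma (z + (x + 1)) := by
  have h := Complex.betaIntegral_eq_Gamma_mul_div (z : ℂ) ((x + 1 : ℝ) : ℂ) (by simpa) (by simpa)
  rw [Complex.betaIntegral, ← Complex.ofReal_add, Complex.Gamma_ofReal, Complex.Gamma_ofReal,
    Complex.Gamma_ofReal, intervalIntegral.integral_of_le zero_le_one,
    integral_Ioc_eq_integral_Ioo] at h
  have h2 : ∀ t ∈ Set.Ioo (0 : ℝ) 1,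
      (t : ℂ) ^ ((z : ℂ) - 1) * (1 - (t : ℂ)) ^ (((x + 1 : ℝ) : ℂ) - 1) =
        ((t ^ (z - 1) * (1 - t) ^ x : ℝ) : ℂ) := by
    intro t ht
    rw [Complex.ofReal_mul, Complex.ofReal_cpow ht.1.le, Complex.ofReal_cpow (by linarith [ht.2])]
    push_cast
    ring_nf
  rw [setIntegral_congr_fun measurableSet_Ioo h2, integral_complex_ofReal] at h
  exact_mod_cast h

lemma summable_inv_mul_sqrt : Summable fun j : ℕ => 1 / (((j : ℝ) + 1) * √(j + 1)) := by
  have h := (Real.summable_one_div_nat_add_rpow 1 (3 / 2)).2 (by norm_num)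
  refine h.congr fun j => ?_
  have hj : (0 : ℝ) < j + 1 := by positivity
  rw [abs_of_pos hj, Real.sqrt_eq_rpow, show (3 / 2 : ℝ) = 1 + 1 / 2 by norm_num,
    Real.rpow_add hj, Real.rpow_one]

lemma inv_add_le {z : ℝ} (hz : 1 / 2 < z) (j : ℕ) : 1 / (z + j) ≤ 2 * (1 / (j + 1)) := by
  have hj : (0 : ℝ) ≤ j := by positivity
  rw [mul_one_div, div_le_div_iff₀ (by linarith) (by linarith)]
  linarith

/-- Termwise integration of `t ^ (z - 1) * (1 - t) ^ (n + ε)` over `(0, 1)`, with `(1 - t) ^ (n + ε)`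
expanded in its binomial series. -/
lemma hasSum_beta (n : ℕ) {ε z : ℝ} (hε : |ε| ≤ 1 / 3) (hz : 1 / 2 < z) :
    HasSum (fun j : ℕ => riseProd j (-(n + ε + 1)) / (z + j))
      (Real.Gamma z * Real.Gamma (n + ε + 1) / Real.Gamma (z + (n + ε + 1))) := by
  have hn : (0 : ℝ) ≤ n := by positivity
  have hx : 0 < (n : ℝ) + ε + 1 := by have := (abs_le.1 hε).1; linarith
  set d : ℕ → ℝ := fun j => riseProd j (-(n + ε + 1)) with hd
  have hint : ∀ j : ℕ, IntegrableOn (fun t : ℝ => t ^ (z + j - 1)) (Set.Ioo 0 1) := fun j => by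
    rw [← intervalIntegrable_iff_integrableOn_Ioo_of_le zero_le_one]
    refine intervalIntegral.intervalIntegrable_rpow' ?_
    have : (0 : ℝ) ≤ j := by positivity
    linarith
  have hval : ∀ j : ℕ, ∫ t in Set.Ioo (0 : ℝ) 1, t ^ (z + j - 1) = 1 / (z + j) := fun j => by
    have : (0 : ℝ) ≤ j := by positivity
    rw [← integral_Ioc_eq_integral_Ioo, ← intervalIntegral.integral_of_le zero_le_one,
      integral_rpow (Or.inl (by linarith)), sub_add_cancel, Real.one_rpow,
      Real.zero_rpow (by linarith), sub_zero]
  have hsum : Summable fun j : ℕ =>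
      ∫ t in Set.Ioo (0 : ℝ) 1, ‖d j * t ^ (z + j - 1)‖ := by
    obtain ⟨C, hC, hb⟩ := exists_riseProd_decay n
    refine Summable.of_nonneg_of_le (fun j => integral_nonneg fun t => norm_nonneg _) (fun j => ?_)
      (summable_inv_mul_sqrt.mul_left (2 * C))
    have hj : (0 : ℝ) ≤ j := by positivity
    have : ∀ t ∈ Set.Ioo (0 : ℝ) 1, ‖d j * t ^ (z + j - 1)‖ = |d j| * t ^ (z + j - 1) := by
      intro t ht
      rw [norm_mul, Real.norm_eq_abs, Real.norm_of_nonneg (Real.rpow_nonneg ht.1.le _)]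
    rw [setIntegral_congr_fun measurableSet_Ioo this, integral_const_mul, hval]
    calc _ ≤ C / √(j + 1) * (2 * (1 / (j + 1))) := by
          have hzj : 0 < z + j := by linarith
          exact mul_le_mul (hb ε hε j) (inv_add_le hz j) (by positivity) (by positivity)
      _ = _ := by field_simp
  have key := hasSum_integral_of_summable_integral_norm
    (μ := volume.restrict (Set.Ioo (0 : ℝ) 1)) (fun j => (hint j).const_mul (d j)) hsum
  have h1 : ∀ t ∈ Set.Ioo (0 : ℝ) 1,
      ∑' j : ℕ, d j * t ^ (z + j - 1) = t ^ (z - 1) * (1 - t) ^ ((n : ℝ) + ε) := by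
    intro t ht
    rw [← (hasSum_one_sub_rpow _ ht).tsum_eq, ← tsum_mul_left]
    refine tsum_congr fun j => ?_
    rw [show z + j - 1 = z - 1 + j by ring, Real.rpow_add_natCast ht.1.ne']
    ring
  rw [setIntegral_congr_fun measurableSet_Ioo h1, integral_beta (by linarith) hx] at key
  refine hasSum_of_eq key fun j => ?_
  rw [integral_const_mul, hval, mul_one_div]

lemma riseProd_mul_sub (j : ℕ) (x : ℝ) :
    riseProd j (-(x + 1)) * (x - j) = x * riseProd j (-x) := by
  induction j with
  | zero => simp [riseProd_zero]
  | succ j ih =>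
    rw [riseProd_neg_succ, riseProd_succ]
    push_cast
    field_simp
    ring

/-- Partial fractions in `z` of `Γ(x + 1) Γ(z) / Γ(x + z)` at `x = n + ε`: the expansion of
`hasSum_beta` multiplied by `x + z`. The constants `riseProd j (-(x + 1))` are kept inside the series
for convergence, and vanish on differentiating in `z`. -/
lemma hasSum_gamma_quot (n : ℕ) {ε z : ℝ} (hε : |ε| ≤ 1 / 3) (hz : 1 / 2 < z) :
    HasSum (fun j : ℕ => riseProd j (-(n + ε + 1)) +
        (n + ε) * riseProd j (-(n + ε)) / (z + j))
      (Real.Gamma (n + ε + 1) * Real.Gamma z / Real.Gamma (n + ε + z)) := by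
  have hn : (0 : ℝ) ≤ n := by positivity
  have hxz : 0 < (n : ℝ) + ε + z := by have := (abs_le.1 hε).1; linarith
  have h := (hasSum_beta n hε hz).mul_left (n + ε + z)
  have hG : Real.Gamma (z + (n + ε + 1)) = (n + ε + z) * Real.Gamma (n + ε + z) := by
    rw [← Real.Gamma_add_one hxz.ne']; ring_nf
  have hG0 := (Real.Gamma_pos_of_pos hxz).ne'
  have hR : (n + ε + z) * (Real.Gamma z * Real.Gamma (n + ε + 1) / Real.Gamma (z + (n + ε + 1))) =
      Real.Gamma (n + ε + 1) * Real.Gamma z / Real.Gamma (n + ε + z) := by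
    rw [hG]
    field_simp
  rw [hR] at h
  refine hasSum_of_eq h fun j => ?_
  · have hj : (0 : ℝ) < z + j := by have : (0 : ℝ) ≤ j := by positivity
                                    linarith
    rw [← riseProd_mul_sub]
    have hzj := hj.ne'
    field_simp
    ring

/-- The `k`-th derivative in `z` of `d + c / (z + j)`, in closed form. -/
noncomputable def zTerm (c d : ℝ) (k j : ℕ) (z : ℝ) : ℝ :=
  (if k = 0 then d else 0) + c * ((-1) ^ k * k.factorial / (z + j) ^ (k + 1))

lemma hasDerivAt_zTerm (c d : ℝ) (k j : ℕ) {z : ℝ} (hz : 0 < z + j) :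
    HasDerivAt (zTerm c d k j) (zTerm c d (k + 1) j z) z := by
  have h1 : HasDerivAt (fun z : ℝ => (z + j) ^ (k + 1)) ((k + 1 : ℕ) * (z + j) ^ k * 1) z := by
    simpa using! ((hasDerivAt_id z).add_const (j : ℝ)).pow (k + 1)
  have h2 := (((h1.inv (by positivity)).const_mul ((-1) ^ k * (k.factorial : ℝ))).const_mul
    c).const_add (if k = 0 then d else 0)
  refine h2.congr_deriv ?_
  simp only [zTerm, Nat.succ_ne_zero, if_false, zero_add, Nat.factorial_succ]
  push_cast
  field_simp
  ring

/-- The partial fraction series may be differentiated term by term on `(1/2, 3/2)`: from the first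
derivative on, its terms are dominated by a multiple of `(j + 1) ^ (-3/2)`. -/
lemma iteratedDeriv_gamma_quot (n : ℕ) {ε : ℝ} (hε : |ε| ≤ 1 / 3) (k : ℕ) :
    ∀ z ∈ Set.Ioo (1 / 2 : ℝ) (3 / 2),
      iteratedDeriv k (fun z : ℝ => Real.Gamma (n + ε + 1) * Real.Gamma z /
          Real.Gamma (n + ε + z)) z =
        ∑' j : ℕ, zTerm ((n + ε) * riseProd j (-(n + ε))) (riseProd j (-(n + ε + 1))) k j z := by
  obtain ⟨C, hC, hb⟩ := exists_riseProd_bound n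
  set c : ℕ → ℝ := fun j => (n + ε) * riseProd j (-(n + ε)) with hc
  set d : ℕ → ℝ := fun j => riseProd j (-(n + ε + 1)) with hd
  have hcb : ∀ j, |c j| ≤ |n + ε| * C * √(j + 1) := fun j => by
    rw [hc, abs_mul, mul_assoc]; gcongr; exact hb ε hε j
  have hbound : ∀ k j : ℕ, ∀ z ∈ Set.Ioo (1 / 2 : ℝ) (3 / 2), ‖zTerm (c j) (d j) (k + 1) j z‖ ≤
      |n + ε| * C * (k + 1).factorial * 2 ^ (k + 2) * (1 / ((j + 1) * √(j + 1))) := by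
    intro k j z hz
    have hj : (0 : ℝ) ≤ j := by positivity
    have hzj : 0 < z + j := by linarith [hz.1]
    simp only [zTerm, Nat.succ_ne_zero, if_false, zero_add]
    rw [Real.norm_eq_abs, abs_mul, abs_div, abs_mul ((-1) ^ _), abs_pow (-1), abs_neg (1 : ℝ),
      abs_one, one_pow, one_mul, Nat.abs_cast, abs_of_pos (by positivity : 0 < (z + j) ^ (k + 1 + 1))]
    have h1 : 1 / (z + j) ^ (k + 2) ≤ 2 ^ (k + 2) * (1 / (j + 1) ^ 2) := by
      calc 1 / (z + j) ^ (k + 2) = (1 / (z + j)) ^ (k + 2) := by rw [one_div_pow]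
        _ ≤ (2 * (1 / (j + 1))) ^ (k + 2) := by gcongr; exact inv_add_le hz.1 j
        _ = 2 ^ (k + 2) * (1 / ((j : ℝ) + 1)) ^ (k + 2) := by rw [mul_pow]
        _ ≤ 2 ^ (k + 2) * (1 / ((j : ℝ) + 1)) ^ 2 := by
          gcongr 2 ^ (k + 2) * ?_
          refine pow_le_pow_of_le_one (by positivity) ?_ (by omega)
          rw [div_le_one (by positivity)]; linarith
        _ = _ := by rw [one_div_pow]
    have hs : √((j : ℝ) + 1) * √(j + 1) = j + 1 := Real.mul_self_sqrt (by positivity)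
    have hs0 : 0 < √((j : ℝ) + 1) := by positivity
    calc _ = |c j| * ((k + 1).factorial * (1 / (z + j) ^ (k + 2))) := by ring
      _ ≤ |n + ε| * C * √(j + 1) * ((k + 1).factorial * (2 ^ (k + 2) * (1 / (j + 1) ^ 2))) := by
        gcongr; exact hcb j
      _ = |n + ε| * C * (k + 1).factorial * 2 ^ (k + 2) * (√(j + 1) * (1 / (j + 1) ^ 2)) := by ring
      _ = _ := by
        congr 1
        rw [mul_one_div, div_eq_div_iff (by positivity) (by positivity)]
        linear_combination ((j : ℝ) + 1) * hs
  induction k with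
  | zero =>
    intro z hz
    rw [iteratedDeriv_zero, ← (hasSum_gamma_quot n hε hz.1).tsum_eq]
    refine tsum_congr fun j => ?_
    simp [zTerm, div_eq_mul_inv]
  | succ k ih =>
    intro z hz
    rw [iteratedDeriv_succ]
    have hev : iteratedDeriv k (fun z : ℝ => Real.Gamma (n + ε + 1) * Real.Gamma z /
          Real.Gamma (n + ε + z)) =ᶠ[𝓝 z] fun z => ∑' j : ℕ, zTerm (c j) (d j) k j z := by
      filter_upwards [isOpen_Ioo.mem_nhds hz] with w hw using ih w hw
    rw [hev.deriv_eq]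
    have hs : Summable fun j : ℕ => zTerm (c j) (d j) k j z := by
      cases k with
      | zero =>
        refine (hasSum_gamma_quot n hε hz.1).summable.congr fun j => ?_
        simp [zTerm, hc, hd, div_eq_mul_inv]
      | succ k =>
        exact Summable.of_norm_bounded (summable_inv_mul_sqrt.mul_left _)
          fun j => hbound k j z hz
    refine (hasDerivAt_tsum_of_isPreconnected (summable_inv_mul_sqrt.mul_left _) isOpen_Ioo
      isPreconnected_Ioo (fun j y hy => ?_) (fun j y hy => hbound k j y hy) hz hs hz).deriv
    have hj : (0 : ℝ) ≤ j := by positivity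
    exact hasDerivAt_zTerm _ _ _ _ (by linarith [hy.1])

lemma iteratedDeriv_gamma_quot_one (n : ℕ) {ε : ℝ} (hε : |ε| ≤ 1 / 3) {m : ℕ} (hm : 1 ≤ m) :
    iteratedDeriv m (fun z : ℝ => Real.Gamma (n + ε + 1) * Real.Gamma z /
          Real.Gamma (n + ε + z)) 1 =
      (-1) ^ m * m.factorial *
        ∑' j : ℕ, (n + ε) * riseProd j (-(n + ε)) / ((j : ℝ) + 1) ^ (m + 1) := by
  rw [iteratedDeriv_gamma_quot n hε m 1 (by norm_num), ← tsum_mul_left]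
  refine tsum_congr fun j => ?_
  rw [zTerm, if_neg (by omega), add_comm (1 : ℝ)]
  ring

/-! ### Third-order Taylor expansions -/

/-- Near `0`, `f ε = c₀ + c₁ ε + c₂ ε² + c₃ ε³ + ε⁴ g ε` with `g` analytic at `0`. Analyticity of the
remainder, rather than a bound `O(ε⁴)`, is what determines the derivatives of `f` up to order three
(`HasTaylor.iteratedDeriv_eq`). -/
def HasTaylor (f : ℝ → ℝ) (c₀ c₁ c₂ c₃ : ℝ) : Prop :=
  ∃ g : ℝ → ℝ, AnalyticAt ℝ g 0 ∧
    ∀ᶠ ε in 𝓝 0, f ε = c₀ + c₁ * ε + c₂ * ε ^ 2 + c₃ * ε ^ 3 + ε ^ 4 * g ε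

namespace HasTaylor

variable {f h : ℝ → ℝ} {c₀ c₁ c₂ c₃ d₀ d₁ d₂ d₃ : ℝ}

lemma congr (hf : HasTaylor f c₀ c₁ c₂ c₃) (hfh : ∀ᶠ ε in 𝓝 0, h ε = f ε) :
    HasTaylor h c₀ c₁ c₂ c₃ := by
  obtain ⟨g, hg, he⟩ := hf
  exact ⟨g, hg, by filter_upwards [he, hfh] with ε h1 h2; rw [h2, h1]⟩

lemma affine (c d : ℝ) : HasTaylor (fun ε => c + d * ε) c d 0 0 :=
  ⟨fun _ => 0, analyticAt_const, Eventually.of_forall fun ε => by ring⟩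

lemma const (c : ℝ) : HasTaylor (fun _ => c) c 0 0 0 :=
  (affine c 0).congr (Eventually.of_forall fun ε => by ring)

lemma add (hf : HasTaylor f c₀ c₁ c₂ c₃) (hh : HasTaylor h d₀ d₁ d₂ d₃) :
    HasTaylor (fun ε => f ε + h ε) (c₀ + d₀) (c₁ + d₁) (c₂ + d₂) (c₃ + d₃) := by
  obtain ⟨g, hg, he⟩ := hf
  obtain ⟨g', hg', he'⟩ := hh
  exact ⟨fun ε => g ε + g' ε, hg.fun_add hg', by
    filter_upwards [he, he'] with ε h1 h2; rw [h1, h2]; ring⟩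

lemma mul (hf : HasTaylor f c₀ c₁ c₂ c₃) (hh : HasTaylor h d₀ d₁ d₂ d₃) :
    HasTaylor (fun ε => f ε * h ε) (c₀ * d₀) (c₀ * d₁ + c₁ * d₀)
      (c₀ * d₂ + c₁ * d₁ + c₂ * d₀) (c₀ * d₃ + c₁ * d₂ + c₂ * d₁ + c₃ * d₀) := by
  obtain ⟨g, hg, he⟩ := hf
  obtain ⟨g', hg', he'⟩ := hh
  refine ⟨fun ε => (c₁ * d₃ + c₂ * d₂ + c₃ * d₁) + (c₂ * d₃ + c₃ * d₂) * ε + c₃ * d₃ * ε ^ 2 +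
    (c₀ + c₁ * ε + c₂ * ε ^ 2 + c₃ * ε ^ 3) * g' ε +
    (d₀ + d₁ * ε + d₂ * ε ^ 2 + d₃ * ε ^ 3) * g ε + ε ^ 4 * g ε * g' ε, by fun_prop, ?_⟩
  filter_upwards [he, he'] with ε h1 h2
  rw [h1, h2]; ring

lemma sum {ι : Type*} (s : Finset ι) {F : ι → ℝ → ℝ} {a₀ a₁ a₂ a₃ : ι → ℝ}
    (hF : ∀ i ∈ s, HasTaylor (F i) (a₀ i) (a₁ i) (a₂ i) (a₃ i)) :
    HasTaylor (fun ε => ∑ i ∈ s, F i ε) (∑ i ∈ s, a₀ i) (∑ i ∈ s, a₁ i) (∑ i ∈ s, a₂ i)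
      (∑ i ∈ s, a₃ i) := by
  classical
  induction s using Finset.induction_on with
  | empty => simpa using const 0
  | insert i s hi ih =>
    simp only [sum_insert hi]
    exact (hF i (mem_insert_self i s)).add (ih fun j hj => hF j (mem_insert_of_mem hj))

lemma iteratedDeriv_pow_mul_eq_zero (a r : ℕ) {g : ℝ → ℝ} (hg : AnalyticAt ℝ g 0) :
    iteratedDeriv a (fun ε => ε ^ (a + r + 1) * g ε) 0 = 0 := by
  induction a generalizing g with
  | zero => simp
  | succ a ih =>
    rw [iteratedDeriv_succ']
    have hev : deriv (fun ε => ε ^ (a + 1 + r + 1) * g ε) =ᶠ[𝓝 0]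
        fun ε => ε ^ (a + r + 1) * ((a + r + 2 : ℕ) * g ε + ε * deriv g ε) := by
      filter_upwards [hg.eventually_analyticAt] with ε hε
      have h1 := (hasDerivAt_pow (a + 1 + r + 1) ε).mul hε.differentiableAt.hasDerivAt
      refine (h1.congr_deriv ?_).deriv
      rw [show a + 1 + r + 1 - 1 = a + r + 1 by omega]
      push_cast
      ring
    rw [hev.iteratedDeriv_eq]
    exact ih ((analyticAt_const.mul hg).add (analyticAt_id.mul hg.deriv))

lemma iteratedDeriv_eq (hf : HasTaylor f c₀ c₁ c₂ c₃) :
    iteratedDeriv 1 f 0 = c₁ ∧ iteratedDeriv 2 f 0 = 2 * c₂ ∧ iteratedDeriv 3 f 0 = 6 * c₃ := by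
  obtain ⟨g, hg, he⟩ := hf
  have key : ∀ a : ℕ, a < 4 → iteratedDeriv a f 0 =
      iteratedDeriv a (fun ε => c₀ + c₁ * ε + c₂ * ε ^ 2 + c₃ * ε ^ 3) 0 := by
    intro a ha
    have he' : f =ᶠ[𝓝 0] (fun ε => c₀ + c₁ * ε + c₂ * ε ^ 2 + c₃ * ε ^ 3) +
        fun ε => ε ^ 4 * g ε := he
    obtain ⟨r, hr⟩ : ∃ r, 4 = a + r + 1 := ⟨3 - a, by omega⟩
    have hrem : AnalyticAt ℝ (fun ε : ℝ => ε ^ 4 * g ε) 0 := by fun_prop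
    rw [he'.iteratedDeriv_eq, iteratedDeriv_add (by fun_prop) hrem.contDiffAt, hr,
      iteratedDeriv_pow_mul_eq_zero a r hg, add_zero]
  have d1 : deriv (fun ε => c₀ + c₁ * ε + c₂ * ε ^ 2 + c₃ * ε ^ 3) =
      fun ε => c₁ + 2 * c₂ * ε + 3 * c₃ * ε ^ 2 := by
    ext ε
    have := ((((hasDerivAt_id ε).const_mul c₁).const_add c₀).add
      ((hasDerivAt_pow 2 ε).const_mul c₂)).add ((hasDerivAt_pow 3 ε).const_mul c₃)
    refine (this.congr_deriv ?_).deriv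
    push_cast; ring
  have d2 : deriv (fun ε => c₁ + 2 * c₂ * ε + 3 * c₃ * ε ^ 2) =
      fun ε => 2 * c₂ + 6 * c₃ * ε := by
    ext ε
    have := (((hasDerivAt_id ε).const_mul (2 * c₂)).const_add c₁).add
      ((hasDerivAt_pow 2 ε).const_mul (3 * c₃))
    refine (this.congr_deriv ?_).deriv
    push_cast; ring
  have d3 : deriv (fun ε => 2 * c₂ + 6 * c₃ * ε) = fun _ => 6 * c₃ := by
    ext ε
    refine ((((hasDerivAt_id ε).const_mul (6 * c₃)).const_add (2 * c₂)).congr_deriv ?_).deriv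
    ring
  refine ⟨?_, ?_, ?_⟩ <;> rw [key _ (by norm_num)] <;>
    simp [iteratedDeriv_succ', iteratedDeriv_zero, d1, d2, d3, -deriv_const_add']

end HasTaylor

/-! ### Harmonic numbers as Taylor coefficients -/

lemma hasTaylor_riseProd (k : ℕ) :
    HasTaylor (riseProd k) 1 (H k) ((H k ^ 2 - H2 k) / 2)
      ((H k ^ 3 - 3 * H k * H2 k + 2 * H3 k) / 6) := by
  induction k with
  | zero =>
    have h0 : riseProd 0 = fun _ => 1 := funext riseProd_zero
    simpa [H, H2, H3, h0] using HasTaylor.const 1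
  | succ k ih =>
    have h := (ih.mul (HasTaylor.affine 1 (1 / (k + 1)))).congr (h := riseProd (k + 1))
      (Eventually.of_forall fun ε => by rw [riseProd_succ]; ring)
    have e1 : H (k + 1) = H k + 1 / (k + 1) := by simp only [H, sum_range_succ]
    have e2 : H2 (k + 1) = H2 k + (1 / (k + 1)) ^ 2 := by
      simp only [H2, sum_range_succ, one_div_pow]
    have e3 : H3 (k + 1) = H3 k + (1 / (k + 1)) ^ 3 := by
      simp only [H3, sum_range_succ, one_div_pow]
    rw [e1, e2, e3]
    clear e1 e2 e3
    generalize 1 / ((k : ℝ) + 1) = b at h ⊢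
    convert h using 1 <;> ring

lemma hasTaylor_inv_one_add (b : ℝ) :
    HasTaylor (fun ε => (1 + b * ε)⁻¹) 1 (-b) (b ^ 2) (-b ^ 3) := by
  have hc : ContinuousAt (fun ε : ℝ => 1 + b * ε) 0 := by fun_prop
  have hne : ∀ᶠ ε : ℝ in 𝓝 0, 1 + b * ε ≠ 0 := hc.eventually_ne (by simp)
  refine ⟨fun ε => b ^ 4 * (1 + b * ε)⁻¹, ?_, ?_⟩
  · exact analyticAt_const.mul (AnalyticAt.inv (by fun_prop) (by simp))
  · filter_upwards [hne] with ε hε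
    field_simp
    ring

lemma hasTaylor_inv_riseProd (k : ℕ) :
    HasTaylor (fun ε => (riseProd k ε)⁻¹) 1 (-H k) ((H k ^ 2 + H2 k) / 2)
      (-(H k ^ 3 + 3 * H k * H2 k + 2 * H3 k) / 6) := by
  induction k with
  | zero =>
    have h0 : riseProd 0 = fun _ => 1 := funext riseProd_zero
    simpa [H, H2, H3, h0] using HasTaylor.const 1
  | succ k ih =>
    have h := (ih.mul (hasTaylor_inv_one_add (1 / (k + 1)))).congr
      (h := fun ε => (riseProd (k + 1) ε)⁻¹)
      (Eventually.of_forall fun ε => by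
        rw [riseProd_succ, mul_inv, div_eq_mul_one_div ε, mul_comm ε])
    have e1 : H (k + 1) = H k + 1 / (k + 1) := by simp only [H, sum_range_succ]
    have e2 : H2 (k + 1) = H2 k + (1 / (k + 1)) ^ 2 := by
      simp only [H2, sum_range_succ, one_div_pow]
    have e3 : H3 (k + 1) = H3 k + (1 / (k + 1)) ^ 3 := by
      simp only [H3, sum_range_succ, one_div_pow]
    rw [e1, e2, e3]
    clear e1 e2 e3
    generalize 1 / ((k : ℝ) + 1) = b at h ⊢
    convert h using 1 <;> ring

open Polynomial in
/-- `riseProd k` as a polynomial. -/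
noncomputable def risePoly (k : ℕ) : ℝ[X] := ∏ i ∈ range k, (1 + C (1 / ((i : ℝ) + 1)) * X)

lemma risePoly_eval (k : ℕ) (x : ℝ) : (risePoly k).eval x = riseProd k x := by
  simp [risePoly, riseProd, Polynomial.eval_prod, div_eq_inv_mul]

lemma risePoly_succ_coeff (k a : ℕ) :
    (risePoly (k + 1)).coeff (a + 1) =
      (risePoly k).coeff (a + 1) + 1 / ((k : ℝ) + 1) * (risePoly k).coeff a := by
  rw [risePoly, prod_range_succ, ← risePoly, mul_add, mul_one, Polynomial.coeff_add,
    mul_left_comm, Polynomial.coeff_C_mul, Polynomial.coeff_mul_X]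

lemma risePoly_coeff_zero (k : ℕ) : (risePoly k).coeff 0 = 1 := by
  rw [Polynomial.coeff_zero_eq_eval_zero, risePoly_eval]; simp [riseProd]

lemma risePoly_coeff_nonneg (k a : ℕ) : 0 ≤ (risePoly k).coeff a := by
  induction k generalizing a with
  | zero =>
    rw [risePoly, prod_range_zero, Polynomial.coeff_one]
    split_ifs <;> norm_num
  | succ k ih =>
    cases a with
    | zero => rw [risePoly_coeff_zero]; exact zero_le_one
    | succ a =>
      rw [risePoly_succ_coeff]
      have h1 := ih (a + 1)
      have h2 := ih a
      positivity

lemma risePoly_coeff_one (k : ℕ) : (risePoly k).coeff 1 = H k := by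
  induction k with
  | zero => simp [risePoly, H, Polynomial.coeff_one]
  | succ k ih =>
    rw [risePoly_succ_coeff, zero_add, ih, risePoly_coeff_zero, H, H, sum_range_succ]
    ring

lemma risePoly_coeff_two (k : ℕ) : (risePoly k).coeff 2 = (H k ^ 2 - H2 k) / 2 := by
  induction k with
  | zero => simp [risePoly, H, H2, Polynomial.coeff_one]
  | succ k ih =>
    rw [risePoly_succ_coeff, show 1 + 1 = 2 from rfl, ih, risePoly_coeff_one, H, H, H2, H2,
      sum_range_succ, sum_range_succ]
    field_simp
    ring

lemma hasSum_risePoly (k : ℕ) (x : ℝ) :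
    HasSum (fun a => (risePoly k).coeff a * x ^ a) (riseProd k x) := by
  rw [← risePoly_eval, Polynomial.eval_eq_sum_range]
  refine hasSum_sum_of_ne_finset_zero fun a ha => ?_
  rw [Polynomial.coeff_eq_zero_of_natDegree_lt, zero_mul]
  simpa [Nat.lt_succ_iff] using ha

/-- Rearrangement of `∑' k, w k * riseProd k (-ε)` as a power series in `ε`. The coefficients of
`risePoly k` are nonnegative, so the double series is dominated by the single series at `|ε|`. -/
lemma hasSum_series {w : ℕ → ℝ} (hw : ∀ k, 0 ≤ w k)
    (hs : Summable fun k : ℕ => w k * √(k + 1)) {ε : ℝ} (hε : |ε| ≤ 1 / 3) :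
    HasSum (fun a : ℕ => ((-1) ^ a * ∑' k, w k * (risePoly k).coeff a) * ε ^ a)
      (∑' k, w k * riseProd k (-ε)) := by
  set F : ℕ × ℕ → ℝ := fun p => w p.1 * ((risePoly p.1).coeff p.2 * (-ε) ^ p.2) with hF
  have hrow : ∀ k, HasSum (fun a => F (k, a)) (w k * riseProd k (-ε)) :=
    fun k => (hasSum_risePoly k (-ε)).mul_left (w k)
  have hnorm : ∀ k, HasSum (fun a => ‖F (k, a)‖) (w k * riseProd k |ε|) := fun k => by
    refine hasSum_of_eq ((hasSum_risePoly k |ε|).mul_left (w k)) fun a => ?_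
    rw [hF, Real.norm_eq_abs, abs_mul, abs_mul, abs_pow, abs_neg, abs_of_nonneg (hw k),
      abs_of_nonneg (risePoly_coeff_nonneg k a)]
  have hsum : Summable F := by
    refine Summable.of_norm ((summable_prod_of_nonneg fun _ => norm_nonneg _).2
      ⟨fun k => (hnorm k).summable, ?_⟩)
    simp only [(hnorm _).tsum_eq]
    refine Summable.of_nonneg_of_le (fun k => ?_) (fun k => ?_) hs
    · exact mul_nonneg (hw k) ((abs_nonneg _).trans (abs_riseProd_le k ε))
    · exact mul_le_mul_of_nonneg_left (riseProd_le_sqrt k (abs_nonneg _) hε) (hw k)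
  have hS : ∑' p, F p = ∑' k, w k * riseProd k (-ε) := by
    rw [hsum.tsum_prod]
    exact tsum_congr fun k => (hrow k).tsum_eq
  have hswap : HasSum (F ∘ Prod.swap) (∑' k, w k * riseProd k (-ε)) := by
    rw [← hS]
    exact (Equiv.prodComm ℕ ℕ).hasSum_iff.2 hsum.hasSum
  have hsw : Summable (F ∘ Prod.swap) := hswap.summable
  refine hswap.prod_fiberwise fun a => ?_
  have h := (hsw.prod_factor a).hasSum
  refine (congrArg (HasSum _) ?_).mp h
  symm
  rw [mul_right_comm, ← tsum_mul_left]
  refine tsum_congr fun k => ?_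
  simp only [hF, Function.comp, Prod.swap]
  rw [neg_pow ε]
  ring

/-- A function given near `0` by a convergent power series has the Taylor data read off from it; the
extra factor `ε` shifts the coefficients by one. -/
lemma hasTaylor_of_hasSum {f : ℝ → ℝ} {b : ℕ → ℝ}
    (hf : ∀ᶠ ε in 𝓝 0, HasSum (fun a => b a * ε ^ a) (f ε)) :
    HasTaylor (fun ε => ε * f ε) 0 (b 0) (b 1) (b 2) := by
  have hs : ∀ᶠ ε : ℝ in 𝓝 0, HasSum (fun a => ε ^ a • b (a + 3)) (∑' a, ε ^ a * b (a + 3)) := by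
    filter_upwards [hf] with ε hε
    have : Summable fun a => ε ^ a * b (a + 3) := by
      rcases eq_or_ne ε 0 with rfl | h0
      · exact summable_of_ne_finset_zero (s := {0}) fun a ha => by
          rw [zero_pow (by simpa using ha), zero_mul]
      · refine (((summable_nat_add_iff 3).2 hε.summable).mul_left (ε ^ 3)⁻¹).congr fun a => ?_
        field_simp
        ring
    exact this.hasSum
  refine ⟨fun ε => ∑' a, ε ^ a * b (a + 3), ?_, ?_⟩
  · refine HasFPowerSeriesAt.analyticAt
      (p := FormalMultilinearSeries.ofScalars ℝ fun a => b (a + 3)) (hasFPowerSeriesAt_iff.2 ?_)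
    filter_upwards [hs] with ε hε
    simpa [FormalMultilinearSeries.coeff_ofScalars] using hε
  · filter_upwards [hf] with ε hε
    rw [← hε.tsum_eq, ← hε.summable.sum_add_tsum_nat_add 3, sum_range_succ, sum_range_succ,
      sum_range_one]
    have : ∑' a, b (a + 3) * ε ^ (a + 3) = ε ^ 3 * ∑' a, ε ^ a * b (a + 3) := by
      rw [← tsum_mul_left]
      exact tsum_congr fun a => by ring
    rw [this]
    ring

/-! ### Expansion of the `z`-derivative around `x = n` -/

lemma HasTaylor.const_mul {f : ℝ → ℝ} {c₀ c₁ c₂ c₃ : ℝ} (c : ℝ) (hf : HasTaylor f c₀ c₁ c₂ c₃) :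
    HasTaylor (fun ε => c * f ε) (c * c₀) (c * c₁) (c * c₂) (c * c₃) := by
  simpa using (HasTaylor.const c).mul hf

/-- The weights are at most `1 / (k + 1) ^ 2`, as `m ≥ 1`, so they can absorb the bound
`riseProd_le_sqrt`. -/
lemma summable_weight_mul_sqrt {m : ℕ} (n : ℕ) (hm : 1 ≤ m) :
    Summable fun k : ℕ =>
      1 / ((n + k + 1 : ℝ) ^ (m + 1) * (Nat.choose (n + k) k : ℝ)) * √(k + 1) := by
  refine Summable.of_nonneg_of_le (fun k => by positivity) (fun k => ?_) summable_inv_mul_sqrt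
  have hs : √((k : ℝ) + 1) * √(k + 1) = k + 1 := Real.mul_self_sqrt (by positivity)
  have hC : (1 : ℝ) ≤ Nat.choose (n + k) k := by
    exact_mod_cast Nat.choose_pos (Nat.le_add_left k n)
  have hp : ((k : ℝ) + 1) ^ 2 ≤ (n + k + 1 : ℝ) ^ (m + 1) := by
    calc ((k : ℝ) + 1) ^ 2 ≤ (n + k + 1 : ℝ) ^ 2 := by
          gcongr
          linarith [(Nat.cast_nonneg n : (0 : ℝ) ≤ n)]
      _ ≤ _ := pow_le_pow_right₀ (by
          linarith [(Nat.cast_nonneg n : (0 : ℝ) ≤ n), (Nat.cast_nonneg k : (0 : ℝ) ≤ k)])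
          (by omega)
  calc _ ≤ 1 / (((k : ℝ) + 1) ^ 2 * 1) * √(k + 1) := by gcongr
    _ = _ := by
      rw [mul_one, div_mul_eq_mul_div, one_mul, div_eq_div_iff (by positivity) (by positivity)]
      linear_combination ((k : ℝ) + 1) * hs

/-- The `m`-th `z`-derivative as an explicit function of `ε`: the series over `j` is cut at `j = n`, the
first `n` terms are rewritten by `riseProd_head` and the others by `riseProd_tail`. -/
lemma iteratedDeriv_gamma_quot_split (n : ℕ) {ε : ℝ} (hε : |ε| ≤ 1 / 3) {m : ℕ} (hm : 1 ≤ m) :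
    iteratedDeriv m (fun z : ℝ => Real.Gamma (n + ε + 1) * Real.Gamma z /
          Real.Gamma (n + ε + z)) 1 =
      (-1) ^ m * m.factorial * (riseProd n ε *
        (∑ j ∈ range n, (-1 : ℝ) ^ j / ((j : ℝ) + 1) ^ m * n.choose (j + 1) *
            (riseProd (n - (j + 1)) ε)⁻¹ +
          (-1) ^ n * (ε * ∑' k : ℕ,
            1 / ((n + k + 1 : ℝ) ^ (m + 1) * (Nat.choose (n + k) k : ℝ)) *
              riseProd k (-ε)))) := by
  rw [iteratedDeriv_gamma_quot_one n hε hm]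
  have hs : Summable fun j : ℕ =>
      (n + ε) * riseProd j (-(n + ε)) / ((j : ℝ) + 1) ^ (m + 1) := by
    obtain ⟨C, hC, hb⟩ := exists_riseProd_bound n
    refine Summable.of_norm_bounded ((summable_weight_mul_sqrt 0 hm).mul_left (|n + ε| * C))
      fun j => ?_
    rw [Real.norm_eq_abs, abs_div, abs_mul,
      abs_of_nonneg (by positivity : 0 ≤ ((j : ℝ) + 1) ^ (m + 1))]
    simp only [Nat.cast_zero, zero_add, Nat.choose_self, Nat.cast_one, mul_one]
    calc _ ≤ |n + ε| * (C * √(j + 1)) / ((j : ℝ) + 1) ^ (m + 1) := by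
          gcongr
          exact hb ε hε j
      _ = _ := by ring
  rw [← hs.sum_add_tsum_nat_add n, mul_add (riseProd n ε), mul_sum]
  congr 2
  · refine sum_congr rfl fun j hj => ?_
    have h := riseProd_head n j (mem_range.1 hj) ε
    have hp := (riseProd_pos (n - (j + 1)) hε).ne'
    have hj1 : (j : ℝ) + 1 ≠ 0 := by positivity
    field_simp
    linear_combination ((j : ℝ) + 1) ^ m * h
  · rw [← tsum_mul_left, ← tsum_mul_left, ← tsum_mul_left]
    refine tsum_congr fun k => ?_
    have h := riseProd_tail n k ε
    have hC : ((n + k).choose k : ℝ) ≠ 0 := by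
      exact_mod_cast (Nat.choose_pos (Nat.le_add_left k n)).ne'
    have hj1 : (n : ℝ) + k + 1 ≠ 0 := by positivity
    rw [add_comm k n]
    push_cast
    field_simp
    linear_combination h

/-- Taylor data of the second factor in `iteratedDeriv_gamma_quot_split`. The infinite series of the
theorem appears at order three, because of the factor `ε` and `risePoly_coeff_two`. The coefficients
of orders one and two are left unspecified since they cancel in the end. -/
lemma exists_hasTaylor_gamma_quot (n : ℕ) {m : ℕ} (hm : 1 ≤ m) : ∃ G₁ G₂ : ℝ,
    HasTaylor
      (fun ε => ∑ j ∈ range n, (-1 : ℝ) ^ j / ((j : ℝ) + 1) ^ m * n.choose (j + 1) *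
          (riseProd (n - (j + 1)) ε)⁻¹ +
        (-1) ^ n * (ε * ∑' k : ℕ,
          1 / ((n + k + 1 : ℝ) ^ (m + 1) * (Nat.choose (n + k) k : ℝ)) * riseProd k (-ε)))
      (∑ j ∈ range n, (-1 : ℝ) ^ j / ((j : ℝ) + 1) ^ m * n.choose (j + 1)) G₁ G₂
      (∑ j ∈ range n, (-1 : ℝ) ^ j / ((j : ℝ) + 1) ^ m * n.choose (j + 1) *
          (-(H (n - (j + 1)) ^ 3 + 3 * H (n - (j + 1)) * H2 (n - (j + 1)) +
            2 * H3 (n - (j + 1))) / 6) +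
        (-1) ^ n * ((∑' k : ℕ,
          (H k ^ 2 - H2 k) / ((n + k + 1 : ℝ) ^ (m + 1) * (Nat.choose (n + k) k : ℝ))) / 2)) := by
  have h1 := HasTaylor.sum (range n) fun j _ => (hasTaylor_inv_riseProd (n - (j + 1))).const_mul
    ((-1 : ℝ) ^ j / ((j : ℝ) + 1) ^ m * n.choose (j + 1))
  have h2 := (hasTaylor_of_hasSum (b := _) (f := fun ε => ∑' k : ℕ,
      1 / ((n + k + 1 : ℝ) ^ (m + 1) * (Nat.choose (n + k) k : ℝ)) * riseProd k (-ε)) <| by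
    filter_upwards [Metric.closedBall_mem_nhds (0 : ℝ) (by norm_num : (0 : ℝ) < 1 / 3)] with ε hε
    exact hasSum_series (fun k => by positivity) (summable_weight_mul_sqrt n hm)
      (by simpa using hε)).const_mul ((-1) ^ n)
  have h3 := h1.add h2
  simp only [mul_one, mul_zero, add_zero, risePoly_coeff_two] at h3
  refine ⟨_, _, (congrArg (HasTaylor _ _ _ _) ?_).mp h3⟩
  rw [← tsum_div_const, ← tsum_mul_left]
  congr 2
  refine tsum_congr fun k => ?_
  ring

end

/-- For integers `m ≥ 1` and `n ≥ 0`,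
`∑_{k=0}^∞ (H_k² − H_k^{(2)})/((n+k+1)^(m+1)·C(n+k,k))
 = ((-1)^(n-1)/3)·∑_{k=1}^n (-1)^(k-1)/k^m·C(n,k)·(H_n³ + 2H_n^{(3)} + 3H_n·H_n^{(2)}
     − H_{n−k}³ − 2H_{n−k}^{(3)} − 3H_{n−k}·H_{n−k}^{(2)})
   + ((-1)^(m+n)/m!)·[(H_n² + H_n^{(2)})·F₁ − H_n·F₂ + (1/3)·F₃]`,
where `F_a` is the `a`-th derivative at `x = n` of
`x ↦ (d^m/dz^m)[Γ(x+1)Γ(z)/Γ(x+z)]|_{z=1}`. -/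
theorem sum_harmonic_sq_binom_eq (m n : ℕ) (hm : 1 ≤ m) :
    (∑' k : ℕ,
        (H k ^ 2 - H2 k) / ((n + k + 1 : ℝ) ^ (m + 1) * (Nat.choose (n + k) k : ℝ))) =
      (-1 : ℝ) ^ (n + 1) / 3 *
        (∑ k ∈ Finset.Icc 1 n, (-1 : ℝ) ^ (k + 1) / (k : ℝ) ^ m * (Nat.choose n k : ℝ) *
          (H n ^ 3 + 2 * H3 n + 3 * H n * H2 n -
            H (n - k) ^ 3 - 2 * H3 (n - k) - 3 * H (n - k) * H2 (n - k))) +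
      (-1 : ℝ) ^ (m + n) / Nat.factorial m *
        ((H n ^ 2 + H2 n) *
            iteratedDeriv 1
              (fun x : ℝ =>
                iteratedDeriv m
                  (fun z : ℝ => Real.Gamma (x + 1) * Real.Gamma z / Real.Gamma (x + z)) 1)
              (n : ℝ) -
          H n *
            iteratedDeriv 2
              (fun x : ℝ =>
                iteratedDeriv m
                  (fun z : ℝ => Real.Gamma (x + 1) * Real.Gamma z / Real.Gamma (x + z)) 1)
              (n : ℝ) +
          1 / 3 *
            iteratedDeriv 3
              (fun x : ℝ =>
                iteratedDeriv m
                  (fun z : ℝ => Real.Gamma (x + 1) * Real.Gamma z / Real.Gamma (x + z)) 1)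
              (n : ℝ)) := by
  set T := ∑' k : ℕ,
    (H k ^ 2 - H2 k) / ((n + k + 1 : ℝ) ^ (m + 1) * (Nat.choose (n + k) k : ℝ)) with hT
  obtain ⟨G₁, G₂, hS⟩ := exists_hasTaylor_gamma_quot n hm
  have hF := (((hasTaylor_riseProd n).mul hS).const_mul ((-1) ^ m * (m.factorial : ℝ))).congr
    (h := fun ε => iteratedDeriv m
      (fun z : ℝ => Real.Gamma (n + ε + 1) * Real.Gamma z / Real.Gamma (n + ε + z)) 1) <| by
    filter_upwards [Metric.closedBall_mem_nhds (0 : ℝ) (by norm_num : (0 : ℝ) < 1 / 3)] with ε hε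
    exact iteratedDeriv_gamma_quot_split n (by simpa using hε) hm
  have hshift : ∀ a : ℕ, iteratedDeriv a (fun x : ℝ => iteratedDeriv m
      (fun z : ℝ => Real.Gamma (x + 1) * Real.Gamma z / Real.Gamma (x + z)) 1) (n : ℝ) =
      iteratedDeriv a (fun ε : ℝ => iteratedDeriv m
        (fun z : ℝ => Real.Gamma (n + ε + 1) * Real.Gamma z / Real.Gamma (n + ε + z)) 1) 0 := by
    intro a
    have h := congrFun (iteratedDeriv_comp_const_add a (fun x : ℝ => iteratedDeriv m
      (fun z : ℝ => Real.Gamma (x + 1) * Real.Gamma z / Real.Gamma (x + z)) 1) (n : ℝ)) 0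
    rw [add_zero] at h
    exact h.symm
  obtain ⟨hF1, hF2, hF3⟩ := hF.iteratedDeriv_eq
  rw [hshift 1, hshift 2, hshift 3, hF1, hF2, hF3]
  -- Reindex the finite sum by `k = j + 1` and split it into the two sums in the Taylor data.
  have hsum : (∑ k ∈ Finset.Icc 1 n, (-1 : ℝ) ^ (k + 1) / (k : ℝ) ^ m * (Nat.choose n k : ℝ) *
        (H n ^ 3 + 2 * H3 n + 3 * H n * H2 n -
          H (n - k) ^ 3 - 2 * H3 (n - k) - 3 * H (n - k) * H2 (n - k))) =
      (H n ^ 3 + 2 * H3 n + 3 * H n * H2 n) *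
        (∑ j ∈ Finset.range n, (-1 : ℝ) ^ j / ((j : ℝ) + 1) ^ m * n.choose (j + 1)) +
      6 * ∑ j ∈ Finset.range n, (-1 : ℝ) ^ j / ((j : ℝ) + 1) ^ m * n.choose (j + 1) *
          (-(H (n - (j + 1)) ^ 3 + 3 * H (n - (j + 1)) * H2 (n - (j + 1)) +
            2 * H3 (n - (j + 1))) / 6) := by
    rw [Finset.mul_sum, Finset.mul_sum, ← Finset.sum_add_distrib,
      ← Finset.Ico_add_one_right_eq_Icc, Finset.sum_Ico_eq_sum_range, Nat.add_sub_cancel]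
    refine Finset.sum_congr rfl fun j _ => ?_
    rw [add_comm 1 j]
    push_cast
    ring
  rw [hsum]
  generalize (∑ j ∈ Finset.range n, (-1 : ℝ) ^ j / ((j : ℝ) + 1) ^ m * n.choose (j + 1)) = A
  generalize (∑ j ∈ Finset.range n, (-1 : ℝ) ^ j / ((j : ℝ) + 1) ^ m * n.choose (j + 1) *
          (-(H (n - (j + 1)) ^ 3 + 3 * H (n - (j + 1)) * H2 (n - (j + 1)) +
            2 * H3 (n - (j + 1))) / 6)) = B
  have hn : (-1 : ℝ) ^ n * (-1) ^ n = 1 := by rw [← mul_pow]; simp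
  have hmm : (-1 : ℝ) ^ m * (-1) ^ m = 1 := by rw [← mul_pow]; simp
  have hfac : (m.factorial : ℝ) ≠ 0 := by positivity
  have hcoef : ∀ X : ℝ, (-1 : ℝ) ^ (m + n) / m.factorial * ((-1) ^ m * m.factorial * X) =
      (-1) ^ n * X := by
    intro X
    rw [pow_add]
    field_simp
    linear_combination X * hmm
  -- The multipliers of `F₁, F₂, F₃` eliminate `G₁` and `G₂`.
  have hbr : ∀ Y σ : ℝ, (H n ^ 2 + H2 n) * (σ * (1 * G₁ + H n * A)) -
      H n * (2 * (σ * (1 * G₂ + H n * G₁ + (H n ^ 2 - H2 n) / 2 * A))) +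
      1 / 3 * (6 * (σ * (1 * (B + Y) + H n * G₂ + (H n ^ 2 - H2 n) / 2 * G₁ +
        (H n ^ 3 - 3 * H n * H2 n + 2 * H3 n) / 6 * A))) =
      σ * (2 * (B + Y) + (H n ^ 3 + 3 * H n * H2 n + 2 * H3 n) / 3 * A) := by
    intros; ring
  rw [hbr, hcoef, pow_succ]
  linear_combination (-T) * hn
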